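/- Let q be a nonzero complex number that is not a root of unity and let z be a fixed square root of q. Let m, n be nonnegative integers, let α : ℤ → ℂ be a sequence, and let F_{L,M} (L, M ≥ 0) satisfy F_{L,M} = Σ_{j∈ℤ} α_j · T(L, M; mj, nj; q) for all nonnegative integers L, M (all such sums are finite since T vanishes when |j| is large). Then for all nonnegative integers L, M: Σ_{i=0}^{M} z^{i²} [L+M−i choose L]_q · F_{L−i, i} = Σ_{j∈ℤ} z^{(nj)²} α_j · T(L, M; (m+n)j, nj; q). -/

import Mathlib

open Finset

noncomputable section

/-- The finite q-Pochhammer symbol `(a;q)_n`. -/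
def qPoch (a q : ℂ) (n : ℕ) : ℂ := ∏ k ∈ Finset.range n, (1 - a * q ^ k)

/-- The infinite q-Pochhammer symbol `(a;q)_∞`. -/
def qPochInf (a q : ℂ) : ℂ := ∏' k : ℕ, (1 - a * q ^ k)

/-- The Gaussian binomial coefficient `[N choose k]_q`, zero unless `0 ≤ k ≤ N`. -/
def qBinom (q : ℂ) (N k : ℤ) : ℂ :=
  if 0 ≤ k ∧ k ≤ N then qPoch q q N.toNat / (qPoch q q k.toNat * qPoch q q (N - k).toNat)
  else 0

/-- `1/(a;q)_k`, with the convention that it is `0` for `k < 0`. -/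
def invPoch (a q : ℂ) (k : ℤ) : ℂ := if 0 ≤ k then (qPoch a q k.toNat)⁻¹ else 0

/-- Warnaar's refined q-trinomial coefficient `T(L, M; a, b; q)`, where `z` is a fixed
square root of `q`, so that `q^(n²/2) = z^(n²)`. -/
def Twar (z q : ℂ) (L M a b : ℤ) : ℂ :=
  ∑' n : ℕ, if (L - a - (n : ℤ)) % 2 = 0 then
    z ^ (n ^ 2) * qBinom q M (n : ℤ) * qBinom q (M + b + (L - a - (n : ℤ)) / 2) (M + b) *
      qBinom q (M - b + (L + a - (n : ℤ)) / 2) (M - b)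
  else 0

/-- Warnaar's refined q-trinomial coefficient `S(L, M; a, b; q)`. -/
def Swar (q : ℂ) (L M a b : ℤ) : ℂ :=
  ∑' n : ℕ, q ^ ((n : ℤ) * ((n : ℤ) + a)) * qBinom q (M + L - a - 2 * (n : ℤ)) M *
    qBinom q (M - a + b) (n : ℤ) * qBinom q (M + a - b) ((n : ℤ) + a)

/-- The Andrews–Baxter q-trinomial coefficient `(L, b; a; q)₂`. -/
def roundTri (q : ℂ) (L : ℕ) (b a : ℤ) : ℂ :=
  ∑' n : ℕ, q ^ ((n : ℤ) * ((n : ℤ) + b)) * qPoch q q L * invPoch q q (n : ℤ) *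
    invPoch q q ((n : ℤ) + a) * invPoch q q ((L : ℤ) - 2 * (n : ℤ) - a)

/-- The Andrews–Baxter q-trinomial `T₀(L; a; q) = q^((L²-a²)/2) (L,a;a;1/q)₂`, where `z`
is a fixed square root of `q`, so that `q^((L²-a²)/2) = z^(L²-a²)`. -/
def T0 (z q : ℂ) (L : ℕ) (a : ℤ) : ℂ := z ^ ((L : ℤ) ^ 2 - a ^ 2) * roundTri q⁻¹ L a a

/-- The partial sum `N_k = n_k + n_(k+1) + ... + n_ν` (0-indexed). -/
def Nsum {ν : ℕ} (n : Fin ν → ℕ) (k : Fin ν) : ℕ := ∑ l : Fin ν, if k ≤ l then n l else 0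

end

lemma aux_poch_ne (q : ℂ) (hroot : ∀ k : ℕ, 0 < k → q ^ k ≠ 1) (n : ℕ) : qPoch q q n ≠ 0 := by
  unfold qPoch
  rw [Finset.prod_ne_zero_iff]
  intro k _ h
  apply hroot (k + 1) (Nat.succ_pos k)
  rw [pow_succ']
  linear_combination -h

lemma aux_poch_succ (q : ℂ) (n : ℕ) : qPoch q q (n + 1) = qPoch q q n * (1 - q ^ (n + 1)) := by
  unfold qPoch
  rw [Finset.prod_range_succ, pow_succ']

lemma aux_poch_zero (q : ℂ) : qPoch q q 0 = 1 := by simp [qPoch]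

lemma qB_nat (q : ℂ) (k d : ℕ) :
    qBinom q ((k : ℤ) + d) k = qPoch q q (k + d) / (qPoch q q k * qPoch q q d) := by
  unfold qBinom
  rw [if_pos (by omega)]
  congr 3
  omega

lemma qB_zero_of (q : ℂ) {N k : ℤ} (h : k < 0 ∨ N < k) : qBinom q N k = 0 := by
  unfold qBinom
  rw [if_neg (by omega)]

lemma qB_self (q : ℂ) (hroot : ∀ k : ℕ, 0 < k → q ^ k ≠ 1) {N : ℤ} (h : 0 ≤ N) :
    qBinom q N N = 1 := by
  obtain ⟨k, rfl⟩ := Int.eq_ofNat_of_zero_le h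
  have := qB_nat q k 0
  simp only [Nat.cast_zero, add_zero] at this
  rw [this, aux_poch_zero]
  have := aux_poch_ne q hroot k
  field_simp

lemma qB_zero_right (q : ℂ) (hroot : ∀ k : ℕ, 0 < k → q ^ k ≠ 1) {N : ℤ} (h : 0 ≤ N) :
    qBinom q N 0 = 1 := by
  obtain ⟨k, rfl⟩ := Int.eq_ofNat_of_zero_le h
  have := qB_nat q 0 k
  simp only [Nat.cast_zero, zero_add] at this
  rw [this, aux_poch_zero]
  have := aux_poch_ne q hroot k
  field_simp

/-- First q-Pascal rule. -/
lemma qB_pascal1 (q : ℂ) (hroot : ∀ k : ℕ, 0 < k → q ^ k ≠ 1) (N k : ℤ)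
    (hk : 1 ≤ k) : qBinom q N k = qBinom q (N - 1) k + q ^ (N - k) * qBinom q (N - 1) (k - 1) := by
  rcases lt_trichotomy N k with h | h | h
  · rw [qB_zero_of q (Or.inr h), qB_zero_of q (Or.inr (by omega)),
      qB_zero_of q (Or.inr (by omega))]
    ring
  · subst h
    rw [qB_self q hroot (by omega), qB_self q hroot (by omega), qB_zero_of q (Or.inr (by omega))]
    simp
  · obtain ⟨a, rfl⟩ : ∃ a : ℕ, k = a + 1 := ⟨(k - 1).toNat, by omega⟩
    obtain ⟨d, rfl⟩ : ∃ d : ℕ, N = a + 1 + (d + 1) := ⟨(N - a - 2).toNat, by omega⟩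
    have e1 := qB_nat q (a + 1) (d + 1)
    have e2 := qB_nat q (a + 1) d
    have e3 := qB_nat q a (d + 1)
    push_cast at e1 e2 e3
    rw [e1, show ((a : ℤ) + 1 + (d + 1) - 1) = a + 1 + d by ring, e2,
      show ((a : ℤ) + 1 - 1) = a by ring, show ((a : ℤ) + 1 + d) = a + (d + 1) by ring, e3,
      show ((a : ℤ) + 1 + (d + 1) - (a + 1)) = ((d + 1 : ℕ) : ℤ) by push_cast; ring, zpow_natCast,
      show a + 1 + (d + 1) = (a + d + 1) + 1 by ring, show a + 1 + d = a + d + 1 by ring,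
      show a + (d + 1) = a + d + 1 by ring, aux_poch_succ q (a + d + 1), aux_poch_succ q a,
      aux_poch_succ q d]
    have h1 := aux_poch_ne q hroot a
    have h2 := aux_poch_ne q hroot d
    have h3 : 1 - q ^ (a + 1) ≠ 0 := fun h => hroot (a + 1) (by omega) (by linear_combination -h)
    have h4 : 1 - q ^ (d + 1) ≠ 0 := fun h => hroot (d + 1) (by omega) (by linear_combination -h)
    field_simp
    ring

/-- Second q-Pascal rule. -/
lemma qB_pascal2 (q : ℂ) (hroot : ∀ k : ℕ, 0 < k → q ^ k ≠ 1) (N k : ℤ)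
    (hk : 1 ≤ k) : qBinom q N k = q ^ k * qBinom q (N - 1) k + qBinom q (N - 1) (k - 1) := by
  rcases lt_trichotomy N k with h | h | h
  · rw [qB_zero_of q (Or.inr h), qB_zero_of q (Or.inr (by omega)),
      qB_zero_of q (Or.inr (by omega))]
    ring
  · subst h
    rw [qB_self q hroot (by omega), qB_self q hroot (by omega), qB_zero_of q (Or.inr (by omega))]
    simp
  · obtain ⟨a, rfl⟩ : ∃ a : ℕ, k = a + 1 := ⟨(k - 1).toNat, by omega⟩
    obtain ⟨d, rfl⟩ : ∃ d : ℕ, N = a + 1 + (d + 1) := ⟨(N - a - 2).toNat, by omega⟩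
    have e1 := qB_nat q (a + 1) (d + 1)
    have e2 := qB_nat q (a + 1) d
    have e3 := qB_nat q a (d + 1)
    push_cast at e1 e2 e3
    rw [e1, show ((a : ℤ) + 1 + (d + 1) - 1) = a + 1 + d by ring, e2,
      show ((a : ℤ) + 1 - 1) = a by ring, show ((a : ℤ) + 1 + d) = a + (d + 1) by ring, e3,
      show ((a : ℤ) + 1) = ((a + 1 : ℕ) : ℤ) by push_cast; ring, zpow_natCast,
      show a + 1 + (d + 1) = (a + d + 1) + 1 by ring, show a + 1 + d = a + d + 1 by ring,
      show a + (d + 1) = a + d + 1 by ring, aux_poch_succ q (a + d + 1), aux_poch_succ q a,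
      aux_poch_succ q d]
    have h1 := aux_poch_ne q hroot a
    have h2 := aux_poch_ne q hroot d
    have h3 : 1 - q ^ (a + 1) ≠ 0 := fun h => hroot (a + 1) (by omega) (by linear_combination -h)
    have h4 : 1 - q ^ (d + 1) ≠ 0 := fun h => hroot (d + 1) (by omega) (by linear_combination -h)
    field_simp
    ring

/-- Coefficients of `1/(x;q)_(P+1)`, extended by `P = -1`. -/
noncomputable def hC (q : ℂ) (P r : ℤ) : ℂ :=
  if P = -1 then (if r = 0 then 1 else 0) else qBinom q (P + r) P

lemma hC_rec (q : ℂ) (hroot : ∀ k : ℕ, 0 < k → q ^ k ≠ 1) (P r : ℤ) (hP : 0 ≤ P) :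
    hC q (P - 1) r = hC q P r - q ^ P * hC q P (r - 1) := by
  unfold hC
  rw [if_neg (by omega : ¬ P = -1), if_neg (by omega : ¬ P = -1)]
  by_cases h0 : P = 0
  · subst h0
    simp only [zero_sub, if_true, zero_add, zpow_zero, one_mul]
    rcases lt_trichotomy r 0 with h | h | h
    · rw [if_neg (by omega), qB_zero_of q (Or.inr (by omega)), qB_zero_of q (Or.inr (by omega))]
      ring
    · rw [if_pos h, h, qB_zero_right q hroot le_rfl, qB_zero_of q (Or.inr (by omega))]
      ring
    · rw [if_neg (by omega), qB_zero_right q hroot (by omega), qB_zero_right q hroot (by omega)]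
      ring
  · rw [if_neg (by omega)]
    have := qB_pascal2 q hroot (P + r) P (by omega)
    rw [show P - 1 + r = P + r - 1 by ring, this, show P + (r - 1) = P + r - 1 by ring]
    ring

/-- The summand. -/
noncomputable def tauT (z q : ℂ) (L a M P Q : ℤ) (n : ℕ) : ℂ :=
  if (L - a - (n : ℤ)) % 2 = 0 then
    z ^ (n ^ 2) * qBinom q M n * hC q P ((L - a - n) / 2) * hC q Q ((L + a - n) / 2) else 0

/-- Generalised trinomial with independent parameters. -/
noncomputable def tau (z q : ℂ) (L a : ℤ) (M : ℕ) (P Q : ℤ) : ℂ :=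
  ∑ n ∈ Finset.range (M + 1), tauT z q L a M P Q n

lemma tau_P (z q : ℂ) (hroot : ∀ k : ℕ, 0 < k → q ^ k ≠ 1) (L a : ℤ) (M : ℕ) (P Q : ℤ)
    (hP : 0 ≤ P) :
    tau z q L a M (P - 1) Q = tau z q L a M P Q - q ^ P * tau z q (L - 1) (a + 1) M P Q := by
  unfold tau
  rw [Finset.mul_sum, ← Finset.sum_sub_distrib]
  refine Finset.sum_congr rfl fun n _ => ?_
  unfold tauT
  by_cases h : (L - a - (n : ℤ)) % 2 = 0
  · rw [if_pos h, if_pos h, if_pos (by omega), hC_rec q hroot P _ hP,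
      show (L - 1 - (a + 1) - (n : ℤ)) / 2 = (L - a - n) / 2 - 1 by omega,
      show (L - 1 + (a + 1) - (n : ℤ)) = (L + a - n) by ring]
    ring
  · rw [if_neg h, if_neg h, if_neg (by omega)]
    ring

lemma tau_Q (z q : ℂ) (hroot : ∀ k : ℕ, 0 < k → q ^ k ≠ 1) (L a : ℤ) (M : ℕ) (P Q : ℤ)
    (hQ : 0 ≤ Q) :
    tau z q L a M P (Q - 1) = tau z q L a M P Q - q ^ Q * tau z q (L - 1) (a - 1) M P Q := by
  unfold tau
  rw [Finset.mul_sum, ← Finset.sum_sub_distrib]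
  refine Finset.sum_congr rfl fun n _ => ?_
  unfold tauT
  by_cases h : (L - a - (n : ℤ)) % 2 = 0
  · rw [if_pos h, if_pos h, if_pos (by omega), hC_rec q hroot Q _ hQ,
      show (L - 1 + (a - 1) - (n : ℤ)) / 2 = (L + a - n) / 2 - 1 by omega,
      show (L - 1 - (a - 1) - (n : ℤ)) = (L - a - n) by ring]
    ring
  · rw [if_neg h, if_neg h, if_neg (by omega)]
    ring

lemma tau_M (z q : ℂ) (hq : q ≠ 0) (hz : z ^ 2 = q) (hroot : ∀ k : ℕ, 0 < k → q ^ k ≠ 1)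
    (L a : ℤ) (M : ℕ) (P Q : ℤ) :
    tau z q L a (M + 1) P Q = tau z q L a M P Q + z * q ^ M * tau z q (L - 1) a M P Q := by
  unfold tau
  have key : ∀ n : ℕ, tauT z q L a ((M + 1 : ℕ) : ℤ) P Q (n + 1) =
      tauT z q L a M P Q (n + 1) + z * q ^ M * tauT z q (L - 1) a M P Q n := by
    intro n
    unfold tauT
    by_cases h : (L - a - ((n + 1 : ℕ) : ℤ)) % 2 = 0
    · rw [if_pos h, if_pos h, if_pos (by push_cast at h; omega),
        qB_pascal1 q hroot _ _ (by push_cast; omega)]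
      push_cast
      rw [show (M : ℤ) + 1 - 1 = M by ring, show (n : ℤ) + 1 - 1 = n by ring,
        show L - 1 - a - (n : ℤ) = L - a - (n + 1) by ring,
        show L - 1 + a - (n : ℤ) = L + a - (n + 1) by ring,
        show (M : ℤ) + 1 - (n + 1) = M - n by ring, zpow_sub₀ hq, zpow_natCast, zpow_natCast]
      have : z ^ ((n + 1) ^ 2) = z * z ^ (n ^ 2) * q ^ n := by
        rw [← hz]; ring
      rw [this]
      field_simp
    · rw [if_neg h, if_neg h, if_neg (by push_cast at h; omega)]
      ring
  rw [Finset.sum_range_succ', Finset.sum_congr rfl (fun n _ => key n), Finset.sum_add_distrib,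
    ← Finset.mul_sum]
  have e0 : tauT z q L a ((M + 1 : ℕ) : ℤ) P Q 0 = tauT z q L a M P Q 0 := by
    unfold tauT
    simp only [Nat.cast_zero]
    rw [qB_zero_right q hroot (by omega), qB_zero_right q hroot (by omega)]
  have e1 : ∑ n ∈ Finset.range (M + 1), tauT z q L a M P Q (n + 1) + tauT z q L a M P Q 0 =
      ∑ n ∈ Finset.range (M + 1), tauT z q L a M P Q n := by
    rw [← Finset.sum_range_succ', Finset.sum_range_succ]
    have : tauT z q L a M P Q (M + 1) = 0 := by
      unfold tauT
      rw [qB_zero_of q (N := M) (k := ((M + 1 : ℕ) : ℤ)) (Or.inr (by push_cast; omega))]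
      simp
    rw [this, add_zero]
  rw [e0, ← e1]
  ring

lemma Twar_eq_tau (z q : ℂ) (L a : ℤ) (M : ℕ) (b : ℤ) (h1 : 0 ≤ M + b) (h2 : 0 ≤ M - b) :
    Twar z q L M a b = tau z q L a M (M + b) (M - b) := by
  unfold Twar tau
  rw [tsum_eq_sum (s := Finset.range (M + 1))]
  · refine Finset.sum_congr rfl fun n _ => ?_
    unfold tauT hC
    rw [if_neg (by omega : ¬ ((M : ℤ) + b = -1)), if_neg (by omega : ¬ ((M : ℤ) - b = -1))]
  · intro n hn
    rw [Finset.mem_range] at hn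
    rw [qB_zero_of q (N := M) (k := (n : ℤ)) (Or.inr (by omega))]
    simp

lemma Twar_zero (z q : ℂ) (L M a b : ℤ)
    (h : M < b ∨ M < -b ∨ L < a ∨ L < -a) : Twar z q L M a b = 0 := by
  unfold Twar
  refine (tsum_congr fun n => ?_).trans tsum_zero
  split_ifs with hp
  · rcases h with h | h | h | h
    · rw [qB_zero_of q (k := M - b) (Or.inl (by omega))]; ring
    · rw [qB_zero_of q (k := M + b) (Or.inl (by omega))]; ring
    · rw [qB_zero_of q (k := M + b) (Or.inr (by omega))]; ring
    · rw [qB_zero_of q (k := M - b) (Or.inr (by omega))]; ring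
  · rfl

lemma Twar_neg (z q : ℂ) (L M a b : ℤ) : Twar z q L M (-a) (-b) = Twar z q L M a b := by
  unfold Twar
  congr 1
  funext n
  by_cases h : (L - a - (n : ℤ)) % 2 = 0
  · rw [if_pos h, if_pos (by omega)]
    simp only [sub_neg_eq_add, ← sub_eq_add_neg]
    ring
  · rw [if_neg h, if_neg (by omega)]

lemma tau_Qneg (z q : ℂ) (L a : ℤ) (M : ℕ) (P : ℤ) (hP : 0 ≤ P) (ha : 0 < a) :
    tau z q L a M P (-1) = 0 := by
  unfold tau
  refine Finset.sum_eq_zero fun n _ => ?_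
  unfold tauT hC
  split_ifs <;> first | rfl | omega | skip
  all_goals first | simp; done | (rw [qB_zero_of q (k := P) (Or.inr (by omega))]; ring)

lemma tau_neg_neg (z q : ℂ) (L a : ℤ) (hL : 1 ≤ L) :
    tau z q L a 0 (-1) (-1) = 0 := by
  unfold tau
  refine Finset.sum_eq_zero fun n hn => ?_
  have : n = 0 := by simpa using hn
  subst this
  unfold tauT hC
  split_ifs <;> first | rfl | (exfalso; push_cast at *; omega) | (exfalso; contradiction) | simp

lemma tau_P' (z q : ℂ) (hroot : ∀ k : ℕ, 0 < k → q ^ k ≠ 1) (L a : ℤ) (M : ℕ) (P Q L' a' P' : ℤ)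
    (hP : 0 ≤ P) (hL : L' = L - 1) (ha : a' = a + 1) (hP' : P' = P - 1) :
    tau z q L a M P' Q = tau z q L a M P Q - q ^ P * tau z q L' a' M P Q := by
  subst hL ha hP'
  exact tau_P z q hroot L a M P Q hP

lemma tau_Q' (z q : ℂ) (hroot : ∀ k : ℕ, 0 < k → q ^ k ≠ 1) (L a : ℤ) (M : ℕ) (P Q L' a' Q' : ℤ)
    (hQ : 0 ≤ Q) (hL : L' = L - 1) (ha : a' = a - 1) (hQ' : Q' = Q - 1) :
    tau z q L a M P Q' = tau z q L a M P Q - q ^ Q * tau z q L' a' M P Q := by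
  subst hL ha hQ'
  exact tau_Q z q hroot L a M P Q hQ

lemma tau_M' (z q : ℂ) (hq : q ≠ 0) (hz : z ^ 2 = q) (hroot : ∀ k : ℕ, 0 < k → q ^ k ≠ 1)
    (L a : ℤ) (M : ℕ) (P Q L' : ℤ) (hL : L' = L - 1) :
    tau z q L a (M + 1) P Q = tau z q L a M P Q + z * q ^ M * tau z q L' a M P Q := by
  subst hL
  exact tau_M z q hq hz hroot L a M P Q

lemma tau_PP (z q : ℂ) (hq : q ≠ 0) (hroot : ∀ k : ℕ, 0 < k → q ^ k ≠ 1)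
    (L a : ℤ) (M : ℕ) (P Q : ℤ) (hP : 1 ≤ P) :
    tau z q L a M P Q - (1 + q) * q ^ (P - 1) * tau z q (L - 1) (a + 1) M P Q
      + q ^ (2 * P - 1) * tau z q (L - 2) (a + 2) M P Q = tau z q L a M (P - 2) Q := by
  have h1 := tau_P' z q hroot L a M (P - 1) Q (L - 1) (a + 1) (P - 2) (by omega) rfl rfl (by ring)
  have h2 := tau_P' z q hroot L a M P Q (L - 1) (a + 1) (P - 1) (by omega) rfl rfl rfl
  have h3 := tau_P' z q hroot (L - 1) (a + 1) M P Q (L - 2) (a + 2) (P - 1) (by omega) (by ring)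
    (by ring) rfl
  have e1 : q ^ P = q * q ^ (P - 1) := by rw [← zpow_one_add₀ hq]; congr 1; ring
  have e2 : q ^ (2 * P - 1) = q * q ^ (P - 1) * q ^ (P - 1) := by
    rw [← zpow_one_add₀ hq, ← zpow_add₀ hq]; congr 1; ring
  rw [h1, h2, h3, e2, e1]
  ring

lemma tau_PQ (z q : ℂ) (hq : q ≠ 0) (hroot : ∀ k : ℕ, 0 < k → q ^ k ≠ 1)
    (L a : ℤ) (M : ℕ) (P : ℤ) (hP : 0 ≤ P) :
    tau z q L a M P P - q ^ P * (tau z q (L - 1) (a + 1) M P P + tau z q (L - 1) (a - 1) M P P)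
      + q ^ (2 * P) * tau z q (L - 2) a M P P = tau z q L a M (P - 1) (P - 1) := by
  have h1 := tau_P' z q hroot L a M P (P - 1) (L - 1) (a + 1) (P - 1) (by omega) rfl rfl (by ring)
  have h2 := tau_Q' z q hroot L a M P P (L - 1) (a - 1) (P - 1) (by omega) rfl rfl rfl
  have h3 := tau_Q' z q hroot (L - 1) (a + 1) M P P (L - 2) a (P - 1) (by omega) (by ring)
    (by ring) rfl
  have e2 : q ^ (2 * P) = q ^ P * q ^ P := by
    rw [← zpow_add₀ hq]; congr 1; ring
  rw [h1, h2, h3, e2]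
  ring

/-- Recurrence for the right-hand side, `b ≥ 1`. -/
lemma tau_big (z q : ℂ) (hq : q ≠ 0) (hz : z ^ 2 = q) (hroot : ∀ k : ℕ, 0 < k → q ^ k ≠ 1)
    (L A : ℤ) (m : ℕ) (P Q : ℤ) (hP : 2 ≤ P) (hQ : 1 ≤ Q) (hPQ : P + Q = 2 * m + 4) :
    tau z q L A (m + 2) P Q - (1 + q) * tau z q L A (m + 1) (P - 1) (Q - 1)
      + q * tau z q L A m (P - 2) (Q - 2)
      - (1 + q) * q ^ (P - 1) * (tau z q (L - 1) (A + 1) (m + 2) P Q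
        - tau z q (L - 1) (A + 1) (m + 1) (P - 1) (Q - 1))
      + q ^ (2 * P - 1) * tau z q (L - 2) (A + 2) (m + 2) P Q
    = q ^ Q * (tau z q (L - 1) (A - 1) (m + 1) (P - 2) Q
        + z * q ^ (m + 1) * tau z q (L - 2) (A - 1) (m + 1) (P - 2) Q
        - tau z q (L - 1) (A - 1) m (P - 3) (Q - 1)) := by
  have h1 := tau_PP z q hq hroot L A (m + 2) P Q (by omega)
  have h1' := tau_M' z q hq hz hroot L A (m + 1) (P - 2) Q (L - 1) rfl
  have h2 := tau_Q' z q hroot L A (m + 1) (P - 2) Q (L - 1) (A - 1) (Q - 1) (by omega) rfl rfl rfl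
  have h3 := tau_Q' z q hroot (L - 1) A (m + 1) (P - 2) Q (L - 2) (A - 1) (Q - 1) (by omega)
    (by ring) rfl rfl
  have h4 := tau_P' z q hroot L A (m + 1) (P - 1) (Q - 1) (L - 1) (A + 1) (P - 2) (by omega)
    rfl rfl (by ring)
  have h5 := tau_M' z q hq hz hroot L A m (P - 2) (Q - 1) (L - 1) rfl
  have h6 := tau_M' z q hq hz hroot (L - 1) A m (P - 2) (Q - 1) (L - 2) (by ring)
  have h7 := tau_Q' z q hroot L A m (P - 2) (Q - 1) (L - 1) (A - 1) (Q - 2) (by omega) rfl rfl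
    (by ring)
  have h8 := tau_P' z q hroot (L - 1) (A - 1) m (P - 2) (Q - 1) (L - 2) A (P - 3) (by omega)
    (by ring) (by ring) (by ring)
  have e1 : q ^ Q = q * q ^ (Q - 1) := by rw [← zpow_one_add₀ hq]; congr 1; ring
  have e2 : q ^ (P - 2) * q ^ (Q - 1) = q ^ m * q ^ m * q := by
    rw [← zpow_add₀ hq, show P - 2 + (Q - 1) = ((m + m + 1 : ℕ) : ℤ) by push_cast; omega,
      zpow_natCast]
    ring
  rw [show m + 1 + 1 = m + 2 from rfl] at h1'
  rw [e1] at h2 h3 ⊢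
  linear_combination h1 + h1' - h2 - z * q ^ (m + 1) * h3 + (1 + q) * h4 - q * h5
    + z * q ^ (m + 1) * h6 + q * h7 + q * q ^ (Q - 1) * h8
    - q * tau z q (L - 2) A m (P - 2) (Q - 1) * e2
    + q ^ (2 * m + 1) * tau z q (L - 2) A m (P - 2) (Q - 1) * hz

/-- Recurrence for the right-hand side, `b = 0`. -/
lemma tau_big0 (z q : ℂ) (hq : q ≠ 0) (hz : z ^ 2 = q) (hroot : ∀ k : ℕ, 0 < k → q ^ k ≠ 1)
    (L a : ℤ) (m : ℕ) (N : ℤ) (hN : N = m + 2) :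
    tau z q L a (m + 2) N N - (1 + q) * tau z q L a (m + 1) (N - 1) (N - 1)
      + q * tau z q L a m (N - 2) (N - 2)
      - q ^ N * (tau z q (L - 1) (a + 1) (m + 2) N N
        - tau z q (L - 1) (a + 1) (m + 1) (N - 1) (N - 1)
        + (tau z q (L - 1) (a - 1) (m + 2) N N
        - tau z q (L - 1) (a - 1) (m + 1) (N - 1) (N - 1)))
      + q ^ (2 * N) * tau z q (L - 2) a (m + 2) N N
    = z * q ^ (N - 1) * (tau z q (L - 1) a (m + 1) (N - 1) (N - 1)
        - tau z q (L - 1) a m (N - 2) (N - 2))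
      + q ^ (2 * N - 1) * tau z q (L - 2) a (m + 1) (N - 1) (N - 1) := by
  have h1 := tau_PQ z q hq hroot L a (m + 2) N (by omega)
  have h1' := tau_M' z q hq hz hroot L a (m + 1) (N - 1) (N - 1) (L - 1) rfl
  have h2 := tau_PQ z q hq hroot L a (m + 1) (N - 1) (by omega)
  have h2' := tau_M' z q hq hz hroot L a m (N - 2) (N - 2) (L - 1) rfl
  have e1 : q ^ (N - 1) = q * q ^ m := by
    rw [show N - 1 = ((m + 1 : ℕ) : ℤ) by push_cast; omega, zpow_natCast]; ring
  have e2 : q ^ N = q * q * q ^ m := by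
    rw [show N = ((m + 2 : ℕ) : ℤ) by push_cast; omega, zpow_natCast]; ring
  have e3 : q ^ (2 * N) = q ^ 4 * q ^ m * q ^ m := by
    rw [show 2 * N = ((m + m + 4 : ℕ) : ℤ) by push_cast; omega, zpow_natCast]; ring
  have e4 : q ^ (2 * N - 1) = q ^ 3 * q ^ m * q ^ m := by
    rw [show 2 * N - 1 = ((m + m + 3 : ℕ) : ℤ) by push_cast; omega, zpow_natCast]; ring
  have e5 : q ^ (2 * (N - 1)) = q ^ 2 * q ^ m * q ^ m := by
    rw [show 2 * (N - 1) = ((m + m + 2 : ℕ) : ℤ) by push_cast; omega, zpow_natCast]; ring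
  rw [show m + 1 + 1 = m + 2 from rfl] at h1'
  rw [show N - 1 - 1 = N - 2 by ring] at h2
  rw [e1, e5] at h2
  rw [e2, e3] at h1
  rw [e1, e2, e3, e4]
  linear_combination h1 + h1' - q * h2 - q * h2'

lemma tau_big1 (z q : ℂ) (hq : q ≠ 0) (hz : z ^ 2 = q) (hroot : ∀ k : ℕ, 0 < k → q ^ k ≠ 1)
    (L a : ℤ) (hL : 1 ≤ L) :
    tau z q L a 1 1 1 - (1 + q) * tau z q L a 0 0 0
      - q * (tau z q (L - 1) (a + 1) 1 1 1
        - tau z q (L - 1) (a + 1) 0 0 0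
        + (tau z q (L - 1) (a - 1) 1 1 1
        - tau z q (L - 1) (a - 1) 0 0 0))
      + q ^ 2 * tau z q (L - 2) a 1 1 1
    = z * tau z q (L - 1) a 0 0 0
      + q * tau z q (L - 2) a 0 0 0 := by
  have h1 := tau_PQ z q hq hroot L a 1 1 (by omega)
  have h1' := tau_M' z q hq hz hroot L a 0 0 0 (L - 1) rfl
  have h2 := tau_PQ z q hq hroot L a 0 0 (by omega)
  have h2' := tau_neg_neg z q L a hL
  norm_num at h1 h1' h2
  linear_combination h1 + h1' - q * h2 - q * h2'

noncomputable def wB (q : ℂ) (i L M : ℤ) : ℂ := qBinom q (L + M - i) L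

noncomputable def omB (q : ℂ) (i L M : ℤ) : ℂ :=
  wB q i L M - (1 + q) * wB q i L (M - 1) + q * wB q i L (M - 2)

lemma wB_succ (q : ℂ) (i L M : ℤ) : wB q (i + 1) L M = wB q i L (M - 1) := by
  unfold wB; congr 1; ring

lemma wB_rec (q : ℂ) (hroot : ∀ k : ℕ, 0 < k → q ^ k ≠ 1) (i L M : ℤ)
    (hL : 1 ≤ L) : wB q i L M - wB q i L (M - 1) = q ^ (M - i) * wB q i (L - 1) M := by
  unfold wB
  rw [qB_pascal1 q hroot _ _ hL, show L + M - i - L = M - i by ring,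
    show L - 1 + M - i = L + M - i - 1 by ring, show L + (M - 1) - i = L + M - i - 1 by ring]
  ring

lemma omB_1 (q : ℂ) (hq : q ≠ 0) (hroot : ∀ k : ℕ, 0 < k → q ^ k ≠ 1) (i L M : ℤ)
    (hL : 1 ≤ L) : omB q i L M = q ^ (M - i) * (wB q i (L - 1) M - wB q i (L - 1) (M - 1)) := by
  have h1 := wB_rec q hroot i L M hL
  have h2 := wB_rec q hroot i L (M - 1) hL
  have e : q ^ (M - i) = q * q ^ (M - 1 - i) := by rw [← zpow_one_add₀ hq]; congr 1; ring
  rw [show M - 1 - 1 = M - 2 by ring] at h2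
  unfold omB
  rw [e] at h1 ⊢
  linear_combination h1 - q * h2

lemma omB_2 (q : ℂ) (hq : q ≠ 0) (hroot : ∀ k : ℕ, 0 < k → q ^ k ≠ 1) (i L M : ℤ)
    (hL : 2 ≤ L) : omB q i L M = q ^ (2 * (M - i)) * wB q i (L - 2) M := by
  rw [omB_1 q hq hroot i L M (by omega), wB_rec q hroot i (L - 1) M (by omega),
    show L - 1 - 1 = L - 2 by ring, two_mul, zpow_add₀ hq]
  ring

lemma omB_2' (z q : ℂ) (hq : q ≠ 0) (hroot : ∀ k : ℕ, 0 < k → q ^ k ≠ 1) (i : ℕ) (L M a b : ℤ)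
    (hL : 1 ≤ L) : q ^ (2 * (M - i)) * wB q i (L - 2) M * Twar z q (L - 2 - i) i a b
      = omB q i L M * Twar z q (L - 2 - i) i a b := by
  by_cases h : 2 ≤ L
  · rw [omB_2 q hq hroot i L M h]
  · rw [Twar_zero z q _ _ _ _ (by omega)]
    ring

noncomputable def Phi (z q : ℂ) (K : ℕ) (L M a b : ℤ) : ℂ :=
  ∑ i ∈ Finset.range K, z ^ (i ^ 2) * wB q i L M * Twar z q (L - i) i a b

/-- The inner recurrence, `b ≥ 1`. -/
lemma Twar_inner (z q : ℂ) (hq : q ≠ 0) (hz : z ^ 2 = q) (hroot : ∀ k : ℕ, 0 < k → q ^ k ≠ 1)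
    (L a b : ℤ) (i : ℕ) (hb : 1 ≤ b) :
    Twar z q L ((i + 1 : ℕ) : ℤ) a b
      - (1 + q) * q ^ (b + i) * Twar z q (L - 1) ((i + 1 : ℕ) : ℤ) (a + 1) b
      + q ^ (2 * b + 1 + 2 * i) * Twar z q (L - 2) ((i + 1 : ℕ) : ℤ) (a + 2) b
    = Twar z q L i a (b - 1) + z * q ^ i * Twar z q (L - 1) i a (b - 1) := by
  by_cases h : b ≤ i + 1
  · have h1 : (0 : ℤ) ≤ ((i + 1 : ℕ) : ℤ) + b := by push_cast; omega
    have h2 : (0 : ℤ) ≤ ((i + 1 : ℕ) : ℤ) - b := by push_cast; omega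
    have h3 : (0 : ℤ) ≤ i + (b - 1) := by omega
    have h4 : (0 : ℤ) ≤ i - (b - 1) := by omega
    rw [Twar_eq_tau z q _ _ _ _ h1 h2, Twar_eq_tau z q _ _ _ _ h1 h2,
      Twar_eq_tau z q _ _ _ _ h1 h2, Twar_eq_tau z q _ _ _ _ h3 h4,
      Twar_eq_tau z q _ _ _ _ h3 h4, ← tau_M' z q hq hz hroot _ _ _ _ _ _ rfl]
    have := tau_PP z q hq hroot L a (i + 1) (((i + 1 : ℕ) : ℤ) + b) (((i + 1 : ℕ) : ℤ) - b)
      (by push_cast; omega)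
    rw [show b + (i : ℤ) = ((i + 1 : ℕ) : ℤ) + b - 1 by push_cast; ring,
      show 2 * b + 1 + 2 * (i : ℤ) = 2 * (((i + 1 : ℕ) : ℤ) + b) - 1 by push_cast; ring,
      show (i : ℤ) + (b - 1) = ((i + 1 : ℕ) : ℤ) + b - 2 by push_cast; ring,
      show (i : ℤ) - (b - 1) = ((i + 1 : ℕ) : ℤ) - b by push_cast; ring]
    exact this
  · have h1 : ((i + 1 : ℕ) : ℤ) < b := by push_cast; omega
    have h2 : (i : ℤ) < b - 1 := by omega
    simp only [Twar_zero z q _ _ _ _ (Or.inl h1), Twar_zero z q _ _ _ _ (Or.inl h2)]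
    ring

/-- The inner recurrence, `b = 0`. -/
lemma Twar_inner0 (z q : ℂ) (hq : q ≠ 0) (hz : z ^ 2 = q) (hroot : ∀ k : ℕ, 0 < k → q ^ k ≠ 1)
    (L a : ℤ) (i : ℕ) :
    Twar z q L ((i + 1 : ℕ) : ℤ) a 0
      - q ^ ((i + 1 : ℕ) : ℤ) * (Twar z q (L - 1) ((i + 1 : ℕ) : ℤ) (a + 1) 0 +
          Twar z q (L - 1) ((i + 1 : ℕ) : ℤ) (a - 1) 0)
      + q ^ (2 * ((i + 1 : ℕ) : ℤ)) * Twar z q (L - 2) ((i + 1 : ℕ) : ℤ) a 0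
    = Twar z q L i a 0 + z * q ^ i * Twar z q (L - 1) i a 0 := by
  have h1 : (0 : ℤ) ≤ ((i + 1 : ℕ) : ℤ) + 0 := by push_cast; omega
  have h2 : (0 : ℤ) ≤ ((i + 1 : ℕ) : ℤ) - 0 := by push_cast; omega
  have h3 : (0 : ℤ) ≤ (i : ℤ) + 0 := by omega
  have h4 : (0 : ℤ) ≤ (i : ℤ) - 0 := by omega
  simp only [Twar_eq_tau z q _ _ _ _ h1 h2, Twar_eq_tau z q _ _ _ _ h3 h4]
  rw [← tau_M' z q hq hz hroot _ _ _ _ _ _ rfl]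
  have := tau_PQ z q hq hroot L a (i + 1) ((i + 1 : ℕ) : ℤ) (by push_cast; omega)
  rw [show ((i + 1 : ℕ) : ℤ) - 1 = i by push_cast; ring] at this
  simp only [add_zero, sub_zero]
  exact this

lemma omB_succ (q : ℂ) (i L M : ℤ) : omB q (i + 1) L M = omB q i L (M - 1) := by
  unfold omB
  rw [wB_succ, wB_succ, wB_succ, show M - 2 - 1 = M - 1 - 2 by ring]

lemma shift_term (z q : ℂ) (hq : q ≠ 0) (hz : z ^ 2 = q) (hroot : ∀ k : ℕ, 0 < k → q ^ k ≠ 1)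
    (i : ℕ) (L M a b : ℤ) (hL : 1 ≤ L) :
    z ^ ((i + 1) ^ 2) * (omB q ((i + 1 : ℕ) : ℤ) L M * (Twar z q (L - 1 - i) i a b
      + z * q ^ i * Twar z q (L - 2 - i) i a b))
    = z * q ^ (M - 1) * (z ^ (i ^ 2) * wB q i (L - 1) (M - 1) * Twar z q (L - 1 - i) i a b
        - z ^ (i ^ 2) * wB q i (L - 1) (M - 2) * Twar z q (L - 1 - i) i a b)
      + q ^ (2 * M - 1) * (z ^ (i ^ 2) * wB q i (L - 2) (M - 1) * Twar z q (L - 2 - i) i a b) := by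
  have h1 := omB_1 q hq hroot i L (M - 1) hL
  have h2 := omB_2' z q hq hroot i L (M - 1) a b hL
  have e1 : q ^ (M - 1) = q ^ i * q ^ (M - 1 - i) := by
    rw [← zpow_natCast, ← zpow_add₀ hq]; congr 1; ring
  have e2 : q ^ (2 * M - 1) = q * q ^ i * q ^ i * q ^ (2 * (M - 1 - i)) := by
    rw [← zpow_natCast, ← zpow_one_add₀ hq, ← zpow_add₀ hq, ← zpow_add₀ hq]; congr 1; ring
  have e3 : z ^ ((i + 1) ^ 2) = z * z ^ (i ^ 2) * q ^ i := by
    rw [← hz]; ring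
  push_cast
  rw [omB_succ, e1, e2, e3]
  rw [show M - 1 - 1 = M - 2 by ring] at h1
  linear_combination z * z ^ (i ^ 2) * q ^ i * Twar z q (L - 1 - i) i a b * h1
    - q * q ^ i * q ^ i * z ^ (i ^ 2) * h2
    + z ^ (i ^ 2) * q ^ i * q ^ i * omB q i L (M - 1) * Twar z q (L - 2 - i) i a b * hz

lemma Phi_rec (z q : ℂ) (hq : q ≠ 0) (hz : z ^ 2 = q) (hroot : ∀ k : ℕ, 0 < k → q ^ k ≠ 1)
    (K : ℕ) (L M a b : ℤ) (hL : 1 ≤ L) (hb : 1 ≤ b) :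
    Phi z q (K + 1) L M a b - (1 + q) * Phi z q (K + 1) L (M - 1) a b
      + q * Phi z q (K + 1) L (M - 2) a b
      - (1 + q) * q ^ (b - 1 + M) * (Phi z q (K + 1) (L - 1) M (a + 1) b
        - Phi z q (K + 1) (L - 1) (M - 1) (a + 1) b)
      + q ^ (2 * b - 1 + 2 * M) * Phi z q (K + 1) (L - 2) M (a + 2) b
    = z * q ^ (M - 1) * (Phi z q K (L - 1) (M - 1) a (b - 1) - Phi z q K (L - 1) (M - 2) a (b - 1))
      + q ^ (2 * M - 1) * Phi z q K (L - 2) (M - 1) a (b - 1) := by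
  have step1 : Phi z q (K + 1) L M a b - (1 + q) * Phi z q (K + 1) L (M - 1) a b
      + q * Phi z q (K + 1) L (M - 2) a b
      - (1 + q) * q ^ (b - 1 + M) * (Phi z q (K + 1) (L - 1) M (a + 1) b
        - Phi z q (K + 1) (L - 1) (M - 1) (a + 1) b)
      + q ^ (2 * b - 1 + 2 * M) * Phi z q (K + 1) (L - 2) M (a + 2) b
      = ∑ i ∈ Finset.range (K + 1), z ^ (i ^ 2) * (omB q i L M * (Twar z q (L - i) i a b
        - (1 + q) * q ^ (b - 1 + i) * Twar z q (L - 1 - i) i (a + 1) b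
        + q ^ (2 * b - 1 + 2 * i) * Twar z q (L - 2 - i) i (a + 2) b)) := by
    simp only [Phi, Finset.mul_sum, ← Finset.sum_sub_distrib, ← Finset.sum_add_distrib]
    refine Finset.sum_congr rfl fun i _ => ?_
    have h1 := omB_1 q hq hroot i L M hL
    have h2 := omB_2' z q hq hroot i L M (a + 2) b hL
    have e1 : q ^ (b - 1 + M) = q ^ (b - 1 + i) * q ^ (M - i) := by
      rw [← zpow_add₀ hq]; congr 1; ring
    have e2 : q ^ (2 * b - 1 + 2 * M) = q ^ (2 * b - 1 + 2 * i) * q ^ (2 * (M - i)) := by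
      rw [← zpow_add₀ hq]; congr 1; ring
    have h0 : omB q i L M = wB q i L M - (1 + q) * wB q i L (M - 1) + q * wB q i L (M - 2) := rfl
    rw [e1, e2]
    linear_combination -z ^ (i ^ 2) * Twar z q (L - i) i a b * h0
      + (1 + q) * q ^ (b - 1 + i) * z ^ (i ^ 2) * Twar z q (L - 1 - i) i (a + 1) b * h1
      + q ^ (2 * b - 1 + 2 * i) * z ^ (i ^ 2) * h2
  rw [step1, Finset.sum_range_succ']
  have z0 : ∀ L' a' : ℤ, Twar z q L' ((0 : ℕ) : ℤ) a' b = 0 := fun L' a' =>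
    Twar_zero z q _ _ _ _ (Or.inl (by push_cast; omega))
  simp only [z0]
  simp only [Phi, Finset.mul_sum, ← Finset.sum_sub_distrib, ← Finset.sum_add_distrib, mul_zero,
    sub_zero, add_zero]
  refine Finset.sum_congr rfl fun i _ => ?_
  rw [← shift_term z q hq hz hroot i L M a (b - 1) hL]
  have := Twar_inner z q hq hz hroot (L - 1 - i) a b i hb
  rw [show L - 2 - (i : ℤ) = L - 1 - i - 1 by ring, ← this,
    show L - ((i + 1 : ℕ) : ℤ) = L - 1 - i by push_cast; ring,
    show L - 1 - ((i + 1 : ℕ) : ℤ) = L - 1 - i - 1 by push_cast; ring,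
    show L - 2 - ((i + 1 : ℕ) : ℤ) = L - 1 - i - 2 by push_cast; ring,
    show b - 1 + ((i + 1 : ℕ) : ℤ) = b + i by push_cast; ring,
    show 2 * b - 1 + 2 * ((i + 1 : ℕ) : ℤ) = 2 * b + 1 + 2 * i by push_cast; ring]

lemma Phi_rec0 (z q : ℂ) (hq : q ≠ 0) (hz : z ^ 2 = q) (hroot : ∀ k : ℕ, 0 < k → q ^ k ≠ 1)
    (K : ℕ) (L M a : ℤ) (hL : 1 ≤ L) :
    Phi z q (K + 1) L M a 0 - (1 + q) * Phi z q (K + 1) L (M - 1) a 0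
      + q * Phi z q (K + 1) L (M - 2) a 0
      - q ^ M * (Phi z q (K + 1) (L - 1) M (a + 1) 0
        - Phi z q (K + 1) (L - 1) (M - 1) (a + 1) 0
        + (Phi z q (K + 1) (L - 1) M (a - 1) 0
        - Phi z q (K + 1) (L - 1) (M - 1) (a - 1) 0))
      + q ^ (2 * M) * Phi z q (K + 1) (L - 2) M a 0
    = z * q ^ (M - 1) * (Phi z q K (L - 1) (M - 1) a 0 - Phi z q K (L - 1) (M - 2) a 0)
      + q ^ (2 * M - 1) * Phi z q K (L - 2) (M - 1) a 0 := by
  have step1 : Phi z q (K + 1) L M a 0 - (1 + q) * Phi z q (K + 1) L (M - 1) a 0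
      + q * Phi z q (K + 1) L (M - 2) a 0
      - q ^ M * (Phi z q (K + 1) (L - 1) M (a + 1) 0
        - Phi z q (K + 1) (L - 1) (M - 1) (a + 1) 0
        + (Phi z q (K + 1) (L - 1) M (a - 1) 0
        - Phi z q (K + 1) (L - 1) (M - 1) (a - 1) 0))
      + q ^ (2 * M) * Phi z q (K + 1) (L - 2) M a 0
      = ∑ i ∈ Finset.range (K + 1), z ^ (i ^ 2) * (omB q i L M * (Twar z q (L - i) i a 0
        - q ^ (i : ℤ) * (Twar z q (L - 1 - i) i (a + 1) 0 + Twar z q (L - 1 - i) i (a - 1) 0)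
        + q ^ (2 * (i : ℤ)) * Twar z q (L - 2 - i) i a 0)) := by
    simp only [Phi, Finset.mul_sum, ← Finset.sum_sub_distrib, ← Finset.sum_add_distrib]
    refine Finset.sum_congr rfl fun i _ => ?_
    have h1 := omB_1 q hq hroot i L M hL
    have h2 := omB_2' z q hq hroot i L M a 0 hL
    have e1 : q ^ M = q ^ (i : ℤ) * q ^ (M - i) := by
      rw [← zpow_add₀ hq]; congr 1; ring
    have e2 : q ^ (2 * M) = q ^ (2 * (i : ℤ)) * q ^ (2 * (M - i)) := by
      rw [← zpow_add₀ hq]; congr 1; ring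
    have h0 : omB q i L M = wB q i L M - (1 + q) * wB q i L (M - 1) + q * wB q i L (M - 2) := rfl
    rw [e1, e2]
    linear_combination -z ^ (i ^ 2) * Twar z q (L - i) i a 0 * h0
      + q ^ (i : ℤ) * z ^ (i ^ 2) * (Twar z q (L - 1 - i) i (a + 1) 0
        + Twar z q (L - 1 - i) i (a - 1) 0) * h1
      + q ^ (2 * (i : ℤ)) * z ^ (i ^ 2) * h2
  rw [step1, Finset.sum_range_succ']
  have z0 : Twar z q (L - ((0 : ℕ) : ℤ)) ((0 : ℕ) : ℤ) a 0
        - q ^ ((0 : ℕ) : ℤ) * (Twar z q (L - 1 - ((0 : ℕ) : ℤ)) ((0 : ℕ) : ℤ) (a + 1) 0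
          + Twar z q (L - 1 - ((0 : ℕ) : ℤ)) ((0 : ℕ) : ℤ) (a - 1) 0)
        + q ^ (2 * ((0 : ℕ) : ℤ)) * Twar z q (L - 2 - ((0 : ℕ) : ℤ)) ((0 : ℕ) : ℤ) a 0 = 0 := by
    simp only [Twar_eq_tau z q _ _ 0 0 (by norm_num) (by norm_num)]
    have h := tau_PQ z q hq hroot L a 0 0 le_rfl
    rw [zero_sub, tau_neg_neg z q L a hL] at h
    simpa using h
  rw [z0]
  simp only [Phi, Finset.mul_sum, ← Finset.sum_sub_distrib, ← Finset.sum_add_distrib, mul_zero,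
    sub_zero, add_zero]
  refine Finset.sum_congr rfl fun i _ => ?_
  rw [← shift_term z q hq hz hroot i L M a 0 hL]
  have := Twar_inner0 z q hq hz hroot (L - 1 - i) a i
  rw [show L - 2 - (i : ℤ) = L - 1 - i - 1 by ring, ← this,
    show L - ((i + 1 : ℕ) : ℤ) = L - 1 - i by push_cast; ring,
    show L - 1 - ((i + 1 : ℕ) : ℤ) = L - 1 - i - 1 by push_cast; ring,
    show L - 2 - ((i + 1 : ℕ) : ℤ) = L - 1 - i - 2 by push_cast; ring]

lemma Phi_zero (z q : ℂ) (K : ℕ) (L M a b : ℤ) (h : L < 0 ∨ M < 0 ∨ M < b) :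
    Phi z q K L M a b = 0 := by
  unfold Phi
  refine Finset.sum_eq_zero fun i _ => ?_
  by_cases hi : M < i
  · unfold wB
    rw [qB_zero_of q (Or.inr (by omega))]; ring
  · rcases h with h | h | h
    · unfold wB
      rw [qB_zero_of q (Or.inl h)]; ring
    · omega
    · rw [Twar_zero z q _ _ _ _ (by omega)]; ring

lemma Twar_Mneg (z q : ℂ) (L M a b : ℤ) (h : M < 0) : Twar z q L M a b = 0 :=
  Twar_zero z q L M a b (by omega)

lemma Twar_00 (z q : ℂ) (hroot : ∀ k : ℕ, 0 < k → q ^ k ≠ 1) (M : ℕ) :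
    Twar z q 0 M 0 0 = 1 := by
  unfold Twar
  rw [tsum_eq_single 0]
  · simp [qB_self q hroot, qB_zero_right q hroot]
  · intro n hn
    rw [qB_zero_of q (N := (M : ℤ) + 0 + (0 - 0 - n) / 2) (k := (M : ℤ) + 0) (Or.inr (by omega))]
    simp

/-- The case `L = 0`. -/
lemma Phi_L0 (z q : ℂ) (hroot : ∀ k : ℕ, 0 < k → q ^ k ≠ 1) (K : ℕ) (M a b : ℤ)
    (hM : 0 ≤ M) (hK : M < K) (hab : (0 ≤ a ∧ 0 ≤ b) ∨ b = 0) :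
    Phi z q K 0 M a b = z ^ (b ^ 2) * Twar z q 0 M (a + b) b := by
  have h1 : Phi z q K 0 M a b = Twar z q 0 ((0 : ℕ) : ℤ) a b := by
    unfold Phi
    rw [Finset.sum_eq_single 0]
    · unfold wB
      rw [qB_zero_right q hroot (by push_cast; omega)]
      simp
    · intro i _ hi
      rw [Twar_zero z q _ _ _ _ (by omega)]; ring
    · intro h
      exfalso; apply h; rw [Finset.mem_range]; omega
  rw [h1]
  by_cases h : a = 0 ∧ b = 0
  · obtain ⟨rfl, rfl⟩ := h
    obtain ⟨M, rfl⟩ := Int.eq_ofNat_of_zero_le hM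
    have := Twar_00 z q hroot M
    have h0 := Twar_00 z q hroot 0
    simp only [add_zero]
    rw [this, h0]
    simp
  · rw [Twar_zero z q _ _ _ _ (by omega), Twar_zero z q 0 M (a + b) b (by omega)]
    ring

/-- The case `M = b`. -/
lemma Phi_Mb (z q : ℂ) (hroot : ∀ k : ℕ, 0 < k → q ^ k ≠ 1) (K : ℕ) (L a : ℤ) (b : ℕ)
    (hL : 0 ≤ L) (hK : (b : ℤ) < K) (hab : 0 ≤ a ∨ b = 0) :
    Phi z q K L b a b = z ^ ((b : ℤ) ^ 2) * Twar z q L b (a + b) b := by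
  have h1 : Phi z q K L b a b = z ^ (b ^ 2) * Twar z q (L - b) b a b := by
    unfold Phi
    rw [Finset.sum_eq_single b]
    · unfold wB
      rw [show L + (b : ℤ) - b = L by ring, qB_self q hroot hL]
      ring
    · intro i _ hi
      by_cases h : i < b
      · rw [Twar_zero z q _ _ _ _ (by omega)]; ring
      · unfold wB
        rw [qB_zero_of q (Or.inr (by omega))]; ring
    · intro h
      exfalso; apply h; rw [Finset.mem_range]; omega
  rw [h1]
  have e : z ^ ((b : ℤ) ^ 2) = z ^ (b ^ 2) := by
    rw [← zpow_natCast]; push_cast; rfl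
  rw [e]
  congr 1
  unfold Twar
  refine tsum_congr fun n => ?_
  by_cases hp : (L - (a + b) - (n : ℤ)) % 2 = 0
  · rw [if_pos hp, if_pos (by omega), show L - (b : ℤ) - a - n = L - (a + b) - n by ring]
    rcases hab with hab | hab
    · by_cases hr : 0 ≤ (L - (a + b) - (n : ℤ)) / 2
      · rw [show (b : ℤ) - b = 0 by ring, qB_zero_right q hroot (by omega),
          qB_zero_right q hroot (by omega)]
      · rw [qB_zero_of q (N := (b : ℤ) + b + (L - (a + b) - (n : ℤ)) / 2) (k := (b : ℤ) + b)
          (Or.inr (by omega))]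
        ring
    · subst hab
      simp
  · rw [if_neg hp, if_neg (by omega)]

/-- The case `b = 0`. -/
lemma main_b0 (z q : ℂ) (hq : q ≠ 0) (hz : z ^ 2 = q) (hroot : ∀ k : ℕ, 0 < k → q ^ k ≠ 1)
    (N : ℕ) : ∀ L : ℤ, L < N → ∀ (R : ℕ) (M : ℤ), M < R → ∀ (a : ℤ) (K : ℕ), M < K →
      Phi z q K L M a 0 = Twar z q L M a 0 := by
  induction N with
  | zero =>
    intro L hL R M hM a K hK
    rw [Phi_zero z q _ _ _ _ _ (by omega), Twar_zero z q _ _ _ _ (by omega)]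
  | succ N ihN =>
    intro L hL R
    induction R with
    | zero =>
      intro M hM a K hK
      rw [Phi_zero z q _ _ _ _ _ (by omega), Twar_zero z q _ _ _ _ (by omega)]
    | succ R ihR =>
      intro M hM a K hK
      by_cases hL0 : L < 0
      · rw [Phi_zero z q _ _ _ _ _ (by omega), Twar_zero z q _ _ _ _ (by omega)]
      by_cases hM0 : M < 0
      · rw [Phi_zero z q _ _ _ _ _ (by omega), Twar_zero z q _ _ _ _ (by omega)]
      by_cases hL1 : L = 0
      · subst hL1
        have := Phi_L0 z q hroot K M a 0 (by omega) hK (Or.inr rfl)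
        simpa using this
      by_cases hM1 : M = 0
      · subst hM1
        have := Phi_Mb z q hroot K L a 0 (by omega) (by simpa using hK) (Or.inr rfl)
        simpa using this
      obtain ⟨K, rfl⟩ : ∃ K' : ℕ, K = K' + 1 := ⟨K - 1, by omega⟩
      have hrec := Phi_rec0 z q hq hz hroot K L M a (by omega)
      rw [ihR (M - 1) (by push_cast at hM; omega) a (K + 1) (by omega),
        ihR (M - 2) (by push_cast at hM; omega) a (K + 1) (by omega),
        ihN (L - 1) (by push_cast at hL; omega) (R + 1) M hM (a + 1) (K + 1) hK,
        ihN (L - 1) (by push_cast at hL; omega) (R + 1) M hM (a - 1) (K + 1) hK,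
        ihN (L - 1) (by push_cast at hL; omega) (R + 1) (M - 1) (by omega) (a + 1) (K + 1)
          (by omega),
        ihN (L - 1) (by push_cast at hL; omega) (R + 1) (M - 1) (by omega) (a - 1) (K + 1)
          (by omega),
        ihN (L - 2) (by push_cast at hL; omega) (R + 1) M hM a (K + 1) hK,
        ihN (L - 1) (by push_cast at hL; omega) (R + 1) (M - 1) (by omega) a K
          (by push_cast at hK; omega),
        ihN (L - 1) (by push_cast at hL; omega) (R + 1) (M - 2) (by omega) a K
          (by push_cast at hK; omega),
        ihN (L - 2) (by push_cast at hL; omega) (R + 1) (M - 1) (by omega) a K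
          (by push_cast at hK; omega)] at hrec
      by_cases hM2 : M = 1
      · subst hM2
        have big := tau_big1 z q hq hz hroot L a (by omega)
        have t1 : ∀ L a : ℤ, Twar z q L 1 a 0 = tau z q L a 1 1 1 := by
          intro L a
          have := Twar_eq_tau z q L a 1 0 (by norm_num) (by norm_num)
          simpa using this
        have t0 : ∀ L a : ℤ, Twar z q L 0 a 0 = tau z q L a 0 0 0 := by
          intro L a
          have := Twar_eq_tau z q L a 0 0 (by norm_num) (by norm_num)
          simpa using this
        have e2 : q ^ (2 * (1 : ℤ)) = q ^ 2 := by norm_cast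
        rw [show (1 : ℤ) - 1 = 0 by norm_num, show (2 * 1 : ℤ) - 1 = 1 by norm_num] at hrec
        simp only [Twar_Mneg z q _ (1 - 2) _ _ (by norm_num), t1, t0, e2, zpow_zero, zpow_one]
          at hrec
        rw [t1]
        linear_combination hrec - big
      · obtain ⟨m, rfl⟩ : ∃ m : ℕ, M = m + 2 := ⟨(M - 2).toNat, by omega⟩
        have big := tau_big0 z q hq hz hroot L a m (m + 2) rfl
        have t2 : ∀ L a : ℤ, Twar z q L (m + 2) a 0 = tau z q L a (m + 2) (m + 2) (m + 2) := by
          intro L a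
          have := Twar_eq_tau z q L a (m + 2) 0 (by push_cast; omega) (by push_cast; omega)
          push_cast at this
          simpa using this
        have t1 : ∀ L a : ℤ, Twar z q L (m + 2 - 1) a 0
            = tau z q L a (m + 1) (m + 2 - 1) (m + 2 - 1) := by
          intro L a
          have := Twar_eq_tau z q L a (m + 1) 0 (by push_cast; omega) (by push_cast; omega)
          push_cast at this
          rw [show (m : ℤ) + 2 - 1 = m + 1 by ring]
          simpa using this
        have t0 : ∀ L a : ℤ, Twar z q L (m + 2 - 2) a 0
            = tau z q L a m (m + 2 - 2) (m + 2 - 2) := by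
          intro L a
          have := Twar_eq_tau z q L a m 0 (by omega) (by omega)
          rw [show (m : ℤ) + 2 - 2 = m by ring]
          simpa using this
        simp only [t2, t1, t0] at hrec
        rw [t2]
        linear_combination hrec - big

/-- Right-hand side recurrence in terms of `Twar`, `b ≥ 1`. -/
lemma Twar_big (z q : ℂ) (hq : q ≠ 0) (hz : z ^ 2 = q) (hroot : ∀ k : ℕ, 0 < k → q ^ k ≠ 1)
    (L A b : ℤ) (m : ℕ) (hb : 1 ≤ b) (hm : b ≤ m + 1) (hA : 1 ≤ A) :
    Twar z q L (m + 2) A b - (1 + q) * Twar z q L (m + 2 - 1) A b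
      + q * Twar z q L (m + 2 - 2) A b
      - (1 + q) * q ^ (b - 1 + (m + 2)) * (Twar z q (L - 1) (m + 2) (A + 1) b
        - Twar z q (L - 1) (m + 2 - 1) (A + 1) b)
      + q ^ (2 * b - 1 + 2 * (m + 2)) * Twar z q (L - 2) (m + 2) (A + 2) b
    = q ^ (m + 2 - b) * (Twar z q (L - 1) (m + 2 - 1) (A - 1) (b - 1)
        + z * q ^ (m + 1) * Twar z q (L - 2) (m + 2 - 1) (A - 1) (b - 1)
        - Twar z q (L - 1) (m + 2 - 2) (A - 1) (b - 1)) := by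
  have big := tau_big z q hq hz hroot L A m (m + 2 + b) (m + 2 - b) (by omega) (by omega) (by ring)
  have t2 : ∀ L A : ℤ, Twar z q L (m + 2) A b = tau z q L A (m + 2) (m + 2 + b) (m + 2 - b) := by
    intro L A
    have := Twar_eq_tau z q L A (m + 2) b (by push_cast; omega) (by push_cast; omega)
    push_cast at this
    exact this
  have t1 : ∀ L A : ℤ, Twar z q L (m + 2 - 1) A b
      = tau z q L A (m + 1) (m + 2 + b - 1) (m + 2 - b - 1) := by
    intro L A
    have := Twar_eq_tau z q L A (m + 1) b (by push_cast; omega) (by push_cast; omega)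
    push_cast at this
    rw [show (m : ℤ) + 2 - 1 = m + 1 by ring, this]
    congr 1 <;> ring
  have t0 : Twar z q L (m + 2 - 2) A b = tau z q L A m (m + 2 + b - 2) (m + 2 - b - 2) := by
    rw [show (m : ℤ) + 2 - 2 = m by ring]
    by_cases h : b ≤ m
    · rw [Twar_eq_tau z q L A m b (by omega) (by omega)]
      congr 1 <;> ring
    · rw [Twar_zero z q _ _ _ _ (by omega), show (m : ℤ) + 2 - b - 2 = -1 by omega,
        tau_Qneg z q _ _ _ _ (by omega) (by omega)]
  have s1 : ∀ L A : ℤ, Twar z q L (m + 2 - 1) A (b - 1)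
      = tau z q L A (m + 1) (m + 2 + b - 2) (m + 2 - b) := by
    intro L A
    have := Twar_eq_tau z q L A (m + 1) (b - 1) (by push_cast; omega) (by push_cast; omega)
    push_cast at this
    rw [show (m : ℤ) + 2 - 1 = m + 1 by ring, this]
    congr 1 <;> ring
  have s0 : ∀ L A : ℤ, Twar z q L (m + 2 - 2) A (b - 1)
      = tau z q L A m (m + 2 + b - 3) (m + 2 - b - 1) := by
    intro L A
    rw [show (m : ℤ) + 2 - 2 = m by ring, Twar_eq_tau z q L A m (b - 1) (by omega) (by omega)]
    congr 1 <;> ring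
  rw [t0, s0]
  simp only [t2, t1, s1]
  rw [show b - 1 + ((m : ℤ) + 2) = m + 2 + b - 1 by ring,
    show 2 * b - 1 + 2 * ((m : ℤ) + 2) = 2 * (m + 2 + b) - 1 by ring]
  exact big

/-- The key transformation, `a, b ≥ 0`. -/
lemma main_b (z q : ℂ) (hq : q ≠ 0) (hz : z ^ 2 = q) (hroot : ∀ k : ℕ, 0 < k → q ^ k ≠ 1)
    (b : ℕ) : ∀ (N : ℕ) (L : ℤ), L < N → ∀ (R : ℕ) (M : ℤ), M < R → ∀ (a : ℤ) (K : ℕ), 0 ≤ a →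
      M < K → Phi z q K L M a b = z ^ ((b : ℤ) ^ 2) * Twar z q L M (a + b) b := by
  induction b with
  | zero =>
    intro N L hL R M hM a K _ hK
    have := main_b0 z q hq hz hroot N L hL R M hM a K hK
    simpa using this
  | succ c ihc =>
  intro N
  induction N with
  | zero =>
    intro L hL R M hM a K ha hK
    rw [Phi_zero z q _ _ _ _ _ (by omega), Twar_zero z q _ _ _ _ (by push_cast; omega), mul_zero]
  | succ N ihN =>
    intro L hL R
    induction R with
    | zero =>
      intro M hM a K ha hK
      rw [Phi_zero z q _ _ _ _ _ (by omega), Twar_zero z q _ _ _ _ (by omega), mul_zero]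
    | succ R ihR =>
      intro M hM a K ha hK
      by_cases hL0 : L < 0
      · rw [Phi_zero z q _ _ _ _ _ (by omega), Twar_zero z q _ _ _ _ (by omega), mul_zero]
      by_cases hM0 : M < ((c + 1 : ℕ) : ℤ)
      · rw [Phi_zero z q _ _ _ _ _ (by omega), Twar_zero z q _ _ _ _ (by omega), mul_zero]
      by_cases hL1 : L = 0
      · subst hL1
        exact Phi_L0 z q hroot K M a _ (by omega) hK (Or.inl ⟨ha, by omega⟩)
      by_cases hM1 : M = ((c + 1 : ℕ) : ℤ)
      · subst hM1
        exact Phi_Mb z q hroot K L a _ (by omega) hK (Or.inl ha)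
      obtain ⟨K, rfl⟩ : ∃ K' : ℕ, K = K' + 1 := ⟨K - 1, by omega⟩
      have hz0 : z ≠ 0 := by
        rintro rfl
        apply hq
        rw [← hz]; norm_num
      have hrec := Phi_rec z q hq hz hroot K L M a ((c + 1 : ℕ) : ℤ) (by omega) (by omega)
      rw [ihR (M - 1) (by omega) a (K + 1) ha (by omega),
        ihR (M - 2) (by omega) a (K + 1) ha (by omega),
        ihN (L - 1) (by omega) (R + 1) M hM (a + 1) (K + 1) (by omega) hK,
        ihN (L - 1) (by omega) (R + 1) (M - 1) (by omega) (a + 1) (K + 1) (by omega) (by omega),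
        ihN (L - 2) (by omega) (R + 1) M hM (a + 2) (K + 1) (by omega) hK,
        show ((c + 1 : ℕ) : ℤ) - 1 = c by push_cast; ring,
        ihc (N + 1) (L - 1) (by omega) (R + 1) (M - 1) (by omega) a K ha (by omega),
        ihc (N + 1) (L - 1) (by omega) (R + 1) (M - 2) (by omega) a K ha (by omega),
        ihc (N + 1) (L - 2) (by omega) (R + 1) (M - 1) (by omega) a K ha (by omega)] at hrec
      obtain ⟨m, rfl⟩ : ∃ m : ℕ, M = m + 2 := ⟨(M - 2).toNat, by omega⟩
      have big := Twar_big z q hq hz hroot L (a + ((c + 1 : ℕ) : ℤ)) ((c + 1 : ℕ) : ℤ) m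
        (by omega) (by omega) (by omega)
      rw [show a + ((c + 1 : ℕ) : ℤ) - 1 = a + c by push_cast; ring,
        show ((c + 1 : ℕ) : ℤ) - 1 = c by push_cast; ring,
        show a + ((c + 1 : ℕ) : ℤ) + 1 = a + 1 + ((c + 1 : ℕ) : ℤ) by ring,
        show a + ((c + 1 : ℕ) : ℤ) + 2 = a + 2 + ((c + 1 : ℕ) : ℤ) by ring] at big
      have e1 : z ^ (((c + 1 : ℕ) : ℤ) ^ 2) * q ^ ((m : ℤ) + 2 - ((c + 1 : ℕ) : ℤ))
          = z * q ^ ((m : ℤ) + 2 - 1) * z ^ ((c : ℤ) ^ 2) := by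
        rw [← hz, ← zpow_natCast z 2, ← zpow_mul, ← zpow_mul, ← zpow_one_add₀ hz0,
          ← zpow_add₀ hz0, ← zpow_add₀ hz0]
        congr 1
        push_cast
        ring
      have e2 : z ^ (((c + 1 : ℕ) : ℤ) ^ 2) * q ^ ((m : ℤ) + 2 - ((c + 1 : ℕ) : ℤ))
          * (z * q ^ (m + 1)) = q ^ (2 * ((m : ℤ) + 2) - 1) * z ^ ((c : ℤ) ^ 2) := by
        rw [e1, ← zpow_natCast q (m + 1), ← hz, ← zpow_natCast z 2, ← zpow_mul, ← zpow_mul,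
          ← zpow_mul, ← zpow_one_add₀ hz0, ← zpow_one_add₀ hz0, ← zpow_add₀ hz0, ← zpow_add₀ hz0,
          ← zpow_add₀ hz0]
        congr 1
        push_cast
        ring
      linear_combination hrec - z ^ (((c + 1 : ℕ) : ℤ) ^ 2) * big
        - (Twar z q (L - 1) (m + 2 - 1) (a + c) c - Twar z q (L - 1) (m + 2 - 2) (a + c) c) * e1
        - Twar z q (L - 2) (m + 2 - 1) (a + c) c * e2

/-- The key transformation for `a = m j`, `b = n j`. -/
lemma key_j (z q : ℂ) (hq : q ≠ 0) (hz : z ^ 2 = q) (hroot : ∀ k : ℕ, 0 < k → q ^ k ≠ 1)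
    (L M m n : ℕ) (j : ℤ) :
    ∑ i ∈ Finset.range (M + 1), z ^ (i ^ 2) * qBinom q ((L : ℤ) + (M : ℤ) - (i : ℤ)) (L : ℤ)
        * Twar z q ((L : ℤ) - i) i (m * j) (n * j)
      = z ^ (((n : ℤ) * j) ^ 2) * Twar z q L M (((m : ℤ) + n) * j) (n * j) := by
  have pos : ∀ k : ℕ, ∑ i ∈ Finset.range (M + 1),
      z ^ (i ^ 2) * qBinom q ((L : ℤ) + (M : ℤ) - (i : ℤ)) (L : ℤ)
        * Twar z q ((L : ℤ) - i) i (m * k) (n * k)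
      = z ^ (((n : ℤ) * k) ^ 2) * Twar z q L M (((m : ℤ) + n) * k) (n * k) := by
    intro k
    have := main_b z q hq hz hroot (n * k) (L + 1) L (by push_cast; omega) (M + 1) M
      (by push_cast; omega) (m * k) (M + 1) (by positivity) (by push_cast; omega)
    push_cast at this
    rw [add_mul]
    exact this
  obtain ⟨k, rfl | rfl⟩ := Int.eq_nat_or_neg j
  · exact pos k
  · simp only [mul_neg, Twar_neg, neg_sq]
    exact pos k

theorem statement_5 (q z : ℂ) (hq : q ≠ 0) (hroot : ∀ k : ℕ, 0 < k → q ^ k ≠ 1)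
    (hz : z ^ 2 = q) (m n : ℕ) (α : ℤ → ℂ) (F : ℤ → ℤ → ℂ)
    (hF : ∀ L M : ℤ, F L M = ∑' j : ℤ, α j * Twar z q L M ((m : ℤ) * j) ((n : ℤ) * j))
    (L M : ℕ) :
    ∑ i ∈ Finset.range (M + 1),
        z ^ (i ^ 2) * qBinom q ((L : ℤ) + (M : ℤ) - (i : ℤ)) (L : ℤ) * F ((L : ℤ) - (i : ℤ)) (i : ℤ)
    = ∑' j : ℤ, z ^ (((n : ℤ) * j) ^ 2) * α j *
        Twar z q (L : ℤ) (M : ℤ) (((m : ℤ) + (n : ℤ)) * j) ((n : ℤ) * j) := by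
  have hsum : ∀ i ∈ Finset.range (M + 1), z ^ (i ^ 2)
      * qBinom q ((L : ℤ) + (M : ℤ) - (i : ℤ)) (L : ℤ) * F ((L : ℤ) - (i : ℤ)) (i : ℤ)
      = ∑' j : ℤ, z ^ (i ^ 2) * qBinom q ((L : ℤ) + (M : ℤ) - (i : ℤ)) (L : ℤ)
        * (α j * Twar z q ((L : ℤ) - i) i (m * j) (n * j)) := by
    intro i _
    rw [hF, tsum_mul_left]
  by_cases hmn : m = 0 ∧ n = 0
  · obtain ⟨rfl, rfl⟩ := hmn
    have k0 := key_j z q hq hz hroot L M 0 0 0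
    simp only [hF]
    simp only [Nat.cast_zero, zero_mul, add_zero, mul_zero] at k0 ⊢
    simp only [tsum_mul_right, tsum_mul_left]
    rw [mul_right_comm, ← k0, Finset.sum_mul]
    refine Finset.sum_congr rfl fun i _ => ?_
    ring
  · rw [Finset.sum_congr rfl hsum, ← Summable.tsum_finsetSum]
    · refine tsum_congr fun j => ?_
      rw [mul_right_comm, ← key_j z q hq hz hroot L M m n j, Finset.sum_mul]
      refine Finset.sum_congr rfl fun i _ => ?_
      ring
    · intro i _
      apply summable_of_hasFiniteSupport
      refine (Set.finite_Icc (-((L : ℤ) + i)) (L + i)).subset ?_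
      intro j hj
      by_contra hj'
      apply hj
      beta_reduce
      rw [Twar_zero]
      · ring
      · by_contra hcon
        push Not at hcon
        obtain ⟨h1, h2, h3, h4⟩ := hcon
        apply hj'
        rw [Set.mem_Icc]
        have hL0 : (0 : ℤ) ≤ L := by omega
        have hi0 : (0 : ℤ) ≤ i := by omega
        rcases Nat.eq_zero_or_pos m with hm | hm
        · have hn : (1 : ℤ) ≤ n := by omega
          constructor <;> nlinarith
        · have hm : (1 : ℤ) ≤ m := by omega
          constructor <;> nlinarith
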